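/- Let S = ⟨S, δ, L⟩ and S' = ⟨S', δ', L'⟩ be image-finite FLTSs. Then the relation Z = {(x,x') ∈ S × S' | φ^S(x) ≤ φ^S'(x') for all formulas φ of fposΔK} is the largest crisp directed simulation between S and S' (i.e., Z is a directed simulation and every directed simulation between S and S' is contained in Z). -/

import Mathlib

open unitInterval

noncomputable section
attribute [local instance] Classical.propDecidable

instance : Fact ((0:ℝ) ≤ 1) := ⟨zero_le_one⟩

/-- A left-continuous t-norm on the unit interval `[0,1]`: a commutative, associative
binary operation with neutral element `1`, increasing in both arguments, that
distributes over suprema of nonempty sets (left-continuity). -/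
structure Tnorm where
  mul : I → I → I
  mul_comm : ∀ x y, mul x y = mul y x
  mul_assoc : ∀ x y z, mul (mul x y) z = mul x (mul y z)
  mul_one : ∀ x, mul x 1 = x
  mul_le_mul : ∀ {a b c d : I}, a ≤ b → c ≤ d → mul a c ≤ mul b d
  left_continuous : ∀ (x : I) (s : Set I), s.Nonempty → mul x (sSup s) = sSup (mul x '' s)

/-- The residuum of a t-norm: `(x ⇒ y) = sup {z | z ⊗ x ≤ y}`. -/
def Tnorm.res (T : Tnorm) (x y : I) : I := sSup {z : I | T.mul z x ≤ y}

/-- A fuzzy labeled transition system over actions `A`, propositions `P`, states `St`. -/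
structure FLTS (A P St : Type) where
  delta : St → A → St → I
  label : St → P → I

/-- A crisp directed simulation between two FLTSs. -/
def IsDirSimulation {A P S S' : Type} (M : FLTS A P S) (M' : FLTS A P S')
    (Z : S → S' → Prop) : Prop :=
  (∀ x x', Z x x' → ∀ p, M.label x p ≤ M'.label x' p) ∧
  (∀ x y x' (ρ : A), Z x x' → 0 < M.delta x ρ y →
    ∃ y', M.delta x ρ y ≤ M'.delta x' ρ y' ∧ Z y y') ∧
  (∀ x x' y' (ρ : A), Z x x' → 0 < M'.delta x' ρ y' →
    ∃ y, M'.delta x' ρ y' ≤ M.delta x ρ y ∧ Z y y')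

/-- Formulas of fposΔK. -/
inductive PKForm (A P : Type) : Type
  | const : I → PKForm A P
  | prop : P → PKForm A P
  | baaz : PKForm A P → PKForm A P
  | and : PKForm A P → PKForm A P → PKForm A P
  | or : PKForm A P → PKForm A P → PKForm A P
  | impl : I → PKForm A P → PKForm A P
  | box : A → PKForm A P → PKForm A P
  | dia : A → PKForm A P → PKForm A P

/-- Semantics of fposΔK formulas. -/
def pkSem (T : Tnorm) {A P St : Type} (M : FLTS A P St) : PKForm A P → St → I
  | .const a, _ => a
  | .prop p, x => M.label x p
  | .baaz φ, x => if pkSem T M φ x = 1 then 1 else 0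
  | .and φ ψ, x => min (pkSem T M φ x) (pkSem T M ψ x)
  | .or φ ψ, x => max (pkSem T M φ x) (pkSem T M ψ x)
  | .impl a φ, x => T.res a (pkSem T M φ x)
  | .box ρ φ, x => ⨅ y, T.res (M.delta x ρ y) (pkSem T M φ y)
  | .dia ρ φ, x => ⨆ y, T.mul (M.delta x ρ y) (pkSem T M φ y)

/-- An FLTS is image-finite if every state has finitely many positive successors
for each action. -/
def ImageFinite {A P St : Type} (M : FLTS A P St) : Prop :=
  ∀ (x : St) (ρ : A), {y : St | 0 < M.delta x ρ y}.Finite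

theorem Tnorm.mul_zero' (T : Tnorm) (x : I) : T.mul x 0 = 0 := by
  have h : T.mul x 0 ≤ T.mul 1 0 := T.mul_le_mul le_top le_rfl
  rw [T.mul_comm 1 0, T.mul_one] at h
  exact le_antisymm h bot_le

theorem Tnorm.res_mono (T : Tnorm) {a b c d : I} (h : b ≤ a) (h' : c ≤ d) :
    T.res a c ≤ T.res b d :=
  sSup_le_sSup fun _ hz => (T.mul_le_mul le_rfl h).trans (le_trans hz h')

theorem Tnorm.res_eq_one (T : Tnorm) {a b : I} : T.res a b = 1 ↔ a ≤ b := by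
  constructor
  · intro h
    have hne : {z : I | T.mul z a ≤ b}.Nonempty :=
      ⟨0, by
        show T.mul 0 a ≤ b
        rw [T.mul_comm, T.mul_zero']; exact bot_le⟩
    have h1 := T.left_continuous a _ hne
    change T.mul a (T.res a b) = _ at h1
    rw [h, T.mul_one] at h1
    rw [h1]
    apply sSup_le
    rintro _ ⟨z, hz, rfl⟩
    rw [T.mul_comm]; exact hz
  · intro h
    refine le_antisymm le_top (le_sSup ?_)
    show T.mul 1 a ≤ b
    rwa [T.mul_comm, T.mul_one]

theorem pkSem_separate (T : Tnorm) {A P S S' : Type} (M : FLTS A P S) (M' : FLTS A P S')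
    {y : S} {y' : S'} (h : ¬ ∀ φ : PKForm A P, pkSem T M φ y ≤ pkSem T M' φ y') :
    ∃ φ : PKForm A P, pkSem T M φ y = 1 ∧ pkSem T M' φ y' = 0 := by
  push Not at h
  obtain ⟨φ, hφ⟩ := h
  refine ⟨.baaz (.impl (pkSem T M φ y) φ), ?_, ?_⟩
  · exact if_pos (T.res_eq_one.2 le_rfl)
  · exact if_neg fun h => absurd (T.res_eq_one.1 h) (not_le.2 hφ)

theorem pkSem_bigOr (T : Tnorm) {A P S S' : Type} (M : FLTS A P S) (M' : FLTS A P S')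
    (y' : S') {s : Set S} (hs : s.Finite)
    (h : ∀ y ∈ s, ∃ φ : PKForm A P, pkSem T M φ y = 1 ∧ pkSem T M' φ y' = 0) :
    ∃ φ : PKForm A P, (∀ y ∈ s, pkSem T M φ y = 1) ∧ pkSem T M' φ y' = 0 := by
  induction s, hs using Set.Finite.induction_on with
  | empty => exact ⟨.const 0, by simp, rfl⟩
  | @insert a s ha hs ih =>
    obtain ⟨φ, h1, h2⟩ := ih fun y hy => h y (Set.mem_insert_of_mem _ hy)
    obtain ⟨ψ, h3, h4⟩ := h a (Set.mem_insert _ _)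
    refine ⟨.or ψ φ, ?_, ?_⟩
    · intro y hy
      simp only [pkSem]
      rcases hy with rfl | hy
      · rw [h3]; exact max_eq_left le_top
      · rw [h1 y hy]; exact max_eq_right le_top
    · simp only [pkSem]; rw [h2, h4, max_self]

theorem pkSem_bigAnd (T : Tnorm) {A P S S' : Type} (M : FLTS A P S) (M' : FLTS A P S')
    (y : S) {s : Set S'} (hs : s.Finite)
    (h : ∀ y' ∈ s, ∃ φ : PKForm A P, pkSem T M φ y = 1 ∧ pkSem T M' φ y' = 0) :
    ∃ φ : PKForm A P, pkSem T M φ y = 1 ∧ ∀ y' ∈ s, pkSem T M' φ y' = 0 := by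
  induction s, hs using Set.Finite.induction_on with
  | empty => exact ⟨.const 1, rfl, by simp⟩
  | @insert a s ha hs ih =>
    obtain ⟨φ, h1, h2⟩ := ih fun y hy => h y (Set.mem_insert_of_mem _ hy)
    obtain ⟨ψ, h3, h4⟩ := h a (Set.mem_insert _ _)
    refine ⟨.and ψ φ, ?_, ?_⟩
    · simp only [pkSem]; rw [h1, h3, min_self]
    · intro y hy
      simp only [pkSem]
      rcases hy with rfl | hy
      · rw [h4]; exact min_eq_left bot_le
      · rw [h2 y hy]; exact min_eq_right bot_le

/-- In an image-finite system the transition degrees below `d` are bounded by some `c < d`. -/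
theorem exists_bound_lt {St : Type} (f : St → I) (hf : {y | 0 < f y}.Finite) {d : I}
    (hd : 0 < d) : ∃ c < d, ∀ y, f y < d → f y ≤ c := by
  have key : ∀ s : Set St, s.Finite → ∃ c < d, ∀ y ∈ s, f y < d → f y ≤ c := by
    intro s hs
    induction s, hs using Set.Finite.induction_on with
    | empty => exact ⟨0, hd, by simp⟩
    | @insert a s ha hs ih =>
      obtain ⟨c, hc, h⟩ := ih
      by_cases hfa : f a < d
      · refine ⟨max c (f a), max_lt hc hfa, ?_⟩
        rintro y (rfl | hy) hyd
        · exact le_max_right _ _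
        · exact (h y hy hyd).trans (le_max_left _ _)
      · refine ⟨c, hc, ?_⟩
        rintro y (rfl | hy) hyd
        · exact absurd hyd hfa
        · exact h y hy hyd
  obtain ⟨c, hc, h⟩ := key _ hf
  refine ⟨c, hc, fun y hy => ?_⟩
  by_cases h0 : 0 < f y
  · exact h y h0 hy
  · exact (not_lt.1 h0).trans bot_le

/-- Hennessy-Milner property of crisp directed simulations: for image-finite FLTSs,
the relation consisting of the pairs `(x,x')` with `φ^S(x) ≤ φ^S'(x')` for all
fposΔK formulas `φ` is the largest crisp directed simulation. -/
theorem hennessyMilner_dirSimulation_fposK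
    {A P S S' : Type} [Nonempty A] [Nonempty P] [Nonempty S] [Nonempty S']
    (T : Tnorm) (M : FLTS A P S) (M' : FLTS A P S')
    (hM : ImageFinite M) (hM' : ImageFinite M') :
    IsDirSimulation M M' (fun x x' => ∀ φ : PKForm A P, pkSem T M φ x ≤ pkSem T M' φ x') ∧
    (∀ Z : S → S' → Prop, IsDirSimulation M M' Z →
      ∀ x x', Z x x' → ∀ φ : PKForm A P, pkSem T M φ x ≤ pkSem T M' φ x') := by
  refine ⟨⟨fun x x' h p => h (.prop p), ?_, ?_⟩, ?_⟩
  · intro x y x' ρ h hd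
    by_contra hcon
    push Not at hcon
    set d := M.delta x ρ y with hdd
    have hfin : {y' | d ≤ M'.delta x' ρ y'}.Finite :=
      (hM' x' ρ).subset fun y' hy' => lt_of_lt_of_le hd hy'
    obtain ⟨φ, h1, h2⟩ := pkSem_bigAnd T M M' y hfin fun y' hy' =>
      pkSem_separate T M M' (by
        intro hall
        obtain ⟨ψ, hψ⟩ := hcon y' hy'
        exact absurd (hall ψ) (not_le.2 hψ))
    obtain ⟨c, hc, hb⟩ := exists_bound_lt _ (hM' x' ρ) hd
    have h3 := h (.dia ρ φ)
    simp only [pkSem] at h3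
    have h4 : d ≤ ⨆ z, T.mul (M.delta x ρ z) (pkSem T M φ z) := by
      refine le_trans (le_of_eq ?_) (le_iSup (fun z => T.mul (M.delta x ρ z) (pkSem T M φ z)) y)
      simp only [h1, T.mul_one, hdd]
    have h5 : (⨆ z, T.mul (M'.delta x' ρ z) (pkSem T M' φ z)) ≤ c := by
      refine iSup_le fun z => ?_
      by_cases hz : d ≤ M'.delta x' ρ z
      · rw [h2 z hz, T.mul_zero']; exact bot_le
      · refine le_trans ?_ (hb z (not_le.1 hz))
        refine (T.mul_le_mul le_rfl (le_top (a := pkSem T M' φ z))).trans (le_of_eq (T.mul_one _))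
    exact absurd (h4.trans (h3.trans h5)) (not_le.2 hc)
  · intro x x' y' ρ h hd
    by_contra hcon
    push Not at hcon
    set d := M'.delta x' ρ y' with hdd
    have hfin : {y | d ≤ M.delta x ρ y}.Finite :=
      (hM x ρ).subset fun y hy => lt_of_lt_of_le hd hy
    obtain ⟨φ, h1, h2⟩ := pkSem_bigOr T M M' y' hfin fun y hy =>
      pkSem_separate T M M' (by
        intro hall
        obtain ⟨ψ, hψ⟩ := hcon y hy
        exact absurd (hall ψ) (not_le.2 hψ))
    obtain ⟨c, hc, hb⟩ := exists_bound_lt _ (hM x ρ) hd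
    have h3 := h (.box ρ (.or φ (.const c)))
    simp only [pkSem] at h3
    have h4 : (1 : I) ≤ ⨅ z, T.res (M.delta x ρ z) (max (pkSem T M φ z) c) := by
      refine le_iInf fun z => ?_
      rw [T.res_eq_one.2]
      by_cases hz : d ≤ M.delta x ρ z
      · rw [h1 z hz]; exact le_max_of_le_left le_top
      · exact le_max_of_le_right (hb z (not_le.1 hz))
    have h5 : (⨅ z, T.res (M'.delta x' ρ z) (max (pkSem T M' φ z) c)) ≤ T.res d c := by
      refine le_trans (iInf_le _ y') (le_of_eq ?_)
      rw [h2, max_eq_right (show (0 : I) ≤ c from bot_le)]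
    have h6 : T.res d c = 1 := le_antisymm le_top (h4.trans (h3.trans h5))
    exact absurd (T.res_eq_one.1 h6) (not_le.2 hc)
  · rintro Z ⟨hZ1, hZ2, hZ3⟩ x x' hxx φ
    induction φ generalizing x x' with
    | const a => exact le_rfl
    | prop p => exact hZ1 x x' hxx p
    | baaz φ ih =>
      simp only [pkSem]
      by_cases h : pkSem T M φ x = 1
      · have h' : pkSem T M' φ x' = 1 := le_antisymm le_top (h ▸ ih x x' hxx)
        rw [if_pos h, if_pos h']
      · rw [if_neg h]; exact bot_le
    | and φ ψ ih1 ih2 => exact min_le_min (ih1 x x' hxx) (ih2 x x' hxx)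
    | or φ ψ ih1 ih2 => exact max_le_max (ih1 x x' hxx) (ih2 x x' hxx)
    | impl a φ ih => exact T.res_mono le_rfl (ih x x' hxx)
    | box ρ φ ih =>
      simp only [pkSem]
      refine le_iInf fun y' => ?_
      by_cases h0 : 0 < M'.delta x' ρ y'
      · obtain ⟨y, hy, hyy⟩ := hZ3 x x' y' ρ hxx h0
        exact (iInf_le _ y).trans (T.res_mono hy (ih y y' hyy))
      · rw [T.res_eq_one.2 ((not_lt.1 h0).trans bot_le)]; exact le_top
    | dia ρ φ ih =>
      simp only [pkSem]
      refine iSup_le fun y => ?_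
      by_cases h0 : 0 < M.delta x ρ y
      · obtain ⟨y', hy, hyy⟩ := hZ2 x y x' ρ hxx h0
        exact (T.mul_le_mul hy (ih y y' hyy)).trans
          (le_iSup (fun z => T.mul (M'.delta x' ρ z) (pkSem T M' φ z)) y')
      · have : M.delta x ρ y = 0 := le_antisymm (not_lt.1 h0) bot_le
        rw [this, T.mul_comm, T.mul_zero']; exact bot_le
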